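/- For real a with 0 < a < 1, the integral ∫_{-∞}^{∞} e^{a t}/(e^t + 1)^3 dt equals (1 - a)(2 - a) π / (2 sin(π a)). -/

import Mathlib

open Real

/-!
The substitution `x = e ^ t / (e ^ t + 1)`, the logistic sigmoid, has `dx = x (1 - x) dt` and turns
`∫ e ^ (u t) / (e ^ t + 1) ^ (u + v) dt` into the Beta integral `B(u, v) = Γ(u) Γ(v) / Γ(u + v)`.
When `u = a` and `u + v = n + 1`, the functional equation lowers `Γ(n + 1 - a)` to `Γ(1 - a)`, and
the reflection formula evaluates `Γ(a) Γ(1 - a)`.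
-/

open MeasureTheory Set
open scoped Nat

theorem sigmoid_eq_exp_div (t : ℝ) : sigmoid t = exp t / (exp t + 1) := by
  rw [sigmoid_def, exp_neg]
  field_simp

theorem sigmoid_neg_eq_inv (t : ℝ) : sigmoid (-t) = (exp t + 1)⁻¹ := by
  rw [sigmoid_def, neg_neg, add_comm]

theorem setIntegral_Ioo_zero_one_eq_integral_sigmoid {E : Type*} [NormedAddCommGroup E]
    [NormedSpace ℝ E] (f : ℝ → E) :
    ∫ x in Ioo 0 1, f x = ∫ t, (sigmoid t * sigmoid (-t)) • f (sigmoid t) := by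
  simp_rw [sigmoid_neg]
  rw [← range_sigmoid, ← image_univ,
    integral_image_eq_integral_deriv_smul_of_monotoneOn MeasurableSet.univ
      (fun t _ ↦ (hasDerivAt_sigmoid t).hasDerivWithinAt) (sigmoid_monotone.monotoneOn _),
    setIntegral_univ]

theorem betaIntegral_eq_integral_sigmoid (u v : ℂ) :
    Complex.betaIntegral u v = ∫ t : ℝ, (sigmoid t : ℂ) ^ u * (sigmoid (-t) : ℂ) ^ v := by
  rw [Complex.betaIntegral, intervalIntegral.integral_of_le zero_le_one,
    integral_Ioc_eq_integral_Ioo, setIntegral_Ioo_zero_one_eq_integral_sigmoid]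
  congr 1 with t
  have sigmoid_ne_zero (s : ℝ) : (sigmoid s : ℂ) ≠ 0 := mod_cast (sigmoid_pos s).ne'
  have one_sub_sigmoid : (1 - sigmoid t : ℂ) = sigmoid (-t) := by simp [sigmoid_neg]
  rw [one_sub_sigmoid, Complex.cpow_sub _ _ (sigmoid_ne_zero t),
    Complex.cpow_sub _ _ (sigmoid_ne_zero (-t)), Complex.cpow_one, Complex.cpow_one,
    Complex.real_smul, Complex.ofReal_mul]
  field_simp [sigmoid_ne_zero]

theorem sigmoid_cpow_mul_sigmoid_neg_cpow (u v : ℂ) (t : ℝ) :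
    (sigmoid t : ℂ) ^ u * (sigmoid (-t) : ℂ) ^ v =
      Complex.exp (u * t) / (Complex.exp t + 1) ^ (u + v) := by
  have exp_add_one_pos : 0 < exp t + 1 := by positivity
  have exp_add_one_ne_zero : ((exp t + 1 : ℝ) : ℂ) ≠ 0 := mod_cast exp_add_one_pos.ne'
  have exp_cpow : (exp t : ℂ) ^ u = Complex.exp (u * t) := by
    rw [Complex.cpow_def_of_ne_zero (mod_cast (exp_pos t).ne'), ← Complex.ofReal_log (exp_pos t).le,
      log_exp, mul_comm]
  calc (sigmoid t : ℂ) ^ u * (sigmoid (-t) : ℂ) ^ v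
      = (exp t : ℂ) ^ u / ((exp t + 1 : ℝ) : ℂ) ^ u * (((exp t + 1 : ℝ) : ℂ) ^ v)⁻¹ := by
        rw [sigmoid_eq_exp_div, sigmoid_neg_eq_inv, Complex.ofReal_div, Complex.ofReal_inv,
          Complex.div_cpow_ofReal_nonneg (exp_pos t).le exp_add_one_pos.le,
          Complex.inv_cpow_ofReal_nonneg exp_add_one_pos.le]
    _ = Complex.exp (u * t) / ((exp t + 1 : ℝ) : ℂ) ^ (u + v) := by
        rw [exp_cpow, Complex.cpow_add _ _ exp_add_one_ne_zero, ← div_eq_mul_inv, div_div]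
    _ = Complex.exp (u * t) / (Complex.exp t + 1) ^ (u + v) := by push_cast; rfl

theorem integral_cexp_div_cpow_eq_betaIntegral (u v : ℂ) :
    ∫ t : ℝ, Complex.exp (u * t) / (Complex.exp t + 1) ^ (u + v) = Complex.betaIntegral u v := by
  simp_rw [betaIntegral_eq_integral_sigmoid, sigmoid_cpow_mul_sigmoid_neg_cpow]

theorem Gamma_mul_Gamma_nat_add_one_sub (n : ℕ) {a : ℂ} (ha : ∀ k : ℕ, a ≠ k + 1) :
    Complex.Gamma a * Complex.Gamma (n + 1 - a) =
      (ascPochhammer ℂ n).eval (1 - a) * π / Complex.sin (π * a) := by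
  have one_sub_ne (k : ℕ) : 1 - a ≠ -k := fun h ↦ ha k (by linear_combination -h)
  have Gamma_shift : Complex.Gamma (n + 1 - a) =
      (ascPochhammer ℂ n).eval (1 - a) * Complex.Gamma (1 - a) := by
    rw [← Complex.Gamma_add_nat_div_Gamma_eq _ one_sub_ne,
      div_mul_cancel₀ _ (Complex.Gamma_ne_zero one_sub_ne), add_sub_assoc, add_comm]
  rw [Gamma_shift, mul_left_comm, Complex.Gamma_mul_Gamma_one_sub, mul_div_assoc]

theorem integral_cexp_div_pow_nat_add_one (n : ℕ) {a : ℂ} (ha_pos : 0 < a.re)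
    (ha_lt : a.re < n + 1) (ha : ∀ k : ℕ, a ≠ k + 1) :
    ∫ t : ℝ, Complex.exp (a * t) / (Complex.exp t + 1) ^ (n + 1) =
      (ascPochhammer ℂ n).eval (1 - a) * π / (n ! * Complex.sin (π * a)) := by
  have re_pos : 0 < (n + 1 - a : ℂ).re := by simpa using ha_lt
  calc ∫ t : ℝ, Complex.exp (a * t) / (Complex.exp t + 1) ^ (n + 1)
      = ∫ t : ℝ, Complex.exp (a * t) / (Complex.exp t + 1) ^ (a + (n + 1 - a)) := by
        simp_rw [add_sub_cancel, ← Nat.cast_add_one, Complex.cpow_natCast]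
    _ = Complex.Gamma a * Complex.Gamma (n + 1 - a) / n ! := by
        rw [integral_cexp_div_cpow_eq_betaIntegral,
          Complex.betaIntegral_eq_Gamma_mul_div _ _ ha_pos re_pos, add_sub_cancel,
          Complex.Gamma_nat_eq_factorial]
    _ = (ascPochhammer ℂ n).eval (1 - a) * π / (n ! * Complex.sin (π * a)) := by
        rw [Gamma_mul_Gamma_nat_add_one_sub n ha, div_div, mul_comm (Complex.sin _)]

theorem stmt2_general (a : ℂ) (ha_pos : 0 < a.re) (ha_lt : a.re < 3) (ha_one : a ≠ 1)
    (ha_two : a ≠ 2) :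
    ∫ t : ℝ, Complex.exp (a * t) / (Complex.exp t + 1) ^ 3 =
      (1 - a) * (2 - a) * π / (2 * Complex.sin (π * a)) := by
  have ha : ∀ k : ℕ, a ≠ k + 1
    | 0 => by simpa using ha_one
    | 1 => by simpa [one_add_one_eq_two] using ha_two
    | k + 2 => by
      rintro rfl
      have re_lt : (k : ℝ) + 2 + 1 < 3 := by simpa using ha_lt
      linarith [k.cast_nonneg (α := ℝ)]
  have eval_two : (ascPochhammer ℂ 2).eval (1 - a) = (1 - a) * (2 - a) := by
    simp only [ascPochhammer_succ_eval, ascPochhammer_zero, Polynomial.eval_one]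
    push_cast
    ring
  have ha_lt' : a.re < (2 : ℕ) + 1 := ha_lt.trans_eq (by norm_num)
  simpa [eval_two] using integral_cexp_div_pow_nat_add_one 2 ha_pos ha_lt' ha

/-- For `0 < a < 1`, `∫ e^{a t}/(e^t + 1)^3 dt = (1-a)(2-a) π / (2 sin (π a))`. -/
theorem stmt2 (a : ℝ) (ha0 : 0 < a) (ha1 : a < 1) :
    ∫ t : ℝ, Real.exp (a * t) / (Real.exp t + 1) ^ 3
      = (1 - a) * (2 - a) * π / (2 * Real.sin (π * a)) := by
  rw [← Complex.ofReal_inj, ← integral_complex_ofReal]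
  exact mod_cast stmt2_general a ha0 (ha1.trans (by norm_num)) (mod_cast ha1.ne)
    (mod_cast (ha1.trans one_lt_two).ne)
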